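/- Let k be a field, T an affine domain over k, and R a k-subalgebra of T. Then for every maximal ideal M of R such that MT ≠ T, the height of M equals the Krull dimension of R. -/

import Mathlib

/-!
Every chain of primes in a `k`-algebra `R` gives a chain of strictly dropping transcendence
degrees of the quotients, so `dim R ≤ trdeg R`, and it suffices to show `trdeg R ≤ ht M`.

Choose a maximal ideal `Q` of `T` over `M`. There is a denominator `F ≠ 0` in `T` such that, modulo
any prime avoiding `F`, the ring `T` does not gain transcendence degree over the image of `R`.
If `ht Q > 1`, some nonzero prime `P ≤ Q` avoids `F` and satisfies `trdeg (T ⧸ P) = trdeg T - 1`, so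
passing from `T` to `T ⧸ P` lowers the transcendence degree of the image of `R` by at most one.
Iterating down to `T ⧸ Q`, where the image is algebraic over `k`, this transcendence degree runs
through all of `trdeg R, …, 1, 0`, and each drop is a strict inclusion between the contractions to
`R` of the primes used, which form a chain from `0` to `M`.
-/

open Algebra Cardinal
open Order (coheight)

lemma coheight_le_of_add_one_le_of_lt {α : Type*} [Preorder α] {f : α → ℕ∞}
    (hf : ∀ a b, a < b → f b + 1 ≤ f a) (a : α) : coheight a ≤ f a := by
  suffices h : ∀ n : ℕ, ∀ a, f a ≤ n → coheight a ≤ n by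
    obtain hfa | hfa := eq_or_ne (f a) ⊤
    · simp [hfa]
    · simpa only [ENat.natCast_toNat hfa] using h (f a).toNat a (ENat.natCast_toNat hfa).ge
  intro n
  induction n with
  | zero => exact fun a ha ↦ Order.coheight_le_coe_iff.2 fun b hab ↦
      absurd ((hf a b hab).trans ha) (by simp)
  | succ n ih =>
    intro a ha
    refine Order.coheight_le_coe_iff.2 fun b hab ↦
      (ih b ?_).trans_lt (by exact_mod_cast n.lt_succ_self)
    exact (ENat.add_le_add_iff_right ENat.one_ne_top).1 ((hf a b hab).trans (by exact_mod_cast ha))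

section TranscendenceDegree

variable {k A B : Type*} [CommRing k] [CommRing A] [CommRing B] [Algebra k A] [Algebra k B]

lemma algebraicIndependent_option_elim_of_apply_eq_zero {ι : Type*} (f : A →ₐ[k] B) {x : ι → A}
    (hx : AlgebraicIndependent k (f ∘ x)) {a : A} (ha : a ∈ nonZeroDivisors A) (hfa : f a = 0) :
    AlgebraicIndependent k (fun o : Option ι ↦ o.elim a x) := by
  refine AlgebraicIndependent.option_iff.2 ⟨hx.of_comp f, fun halg ↦ ?_⟩
  obtain ⟨⟨b, hb⟩, hb_ne, c, hbc⟩ := halg.exists_nonzero_dvd ha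
  rw [adjoin_range_eq_range_aeval] at hb
  obtain ⟨p, rfl⟩ := hb
  replace hbc : MvPolynomial.aeval x p = a * c := hbc
  have hp : p = 0 := hx.eq_zero_of_aeval_eq_zero p <|
    calc MvPolynomial.aeval (f ∘ x) p = f (MvPolynomial.aeval x p) := by
          rw [← AlgHom.comp_apply, MvPolynomial.comp_aeval]; rfl
      _ = 0 := by rw [hbc, map_mul, hfa, zero_mul]
  exact hb_ne (Subtype.ext (by simp [hp]))

lemma toENat_trdeg_add_one_le_of_surjective_of_not_injective [Nontrivial k] [IsDomain A]
    [NoZeroDivisors B] [FaithfulSMul k B] (f : A →ₐ[k] B) (hf : Function.Surjective f)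
    (hf' : ¬ Function.Injective f) :
    toENat (trdeg k B) + 1 ≤ toENat (trdeg k A) := by
  obtain ⟨s, hs⟩ := exists_isTranscendenceBasis k B
  obtain ⟨a, hfa, ha⟩ : ∃ a, f a = 0 ∧ a ≠ 0 := by
    simpa [injective_iff_map_eq_zero] using hf'
  obtain ⟨g, hg⟩ := hf.hasRightInverse
  have hgs : AlgebraicIndependent k (f ∘ fun b : s ↦ g b) := by
    simpa only [Function.comp_def, hg _] using hs.1
  have hle := (algebraicIndependent_option_elim_of_apply_eq_zero f hgs
    (mem_nonZeroDivisors_of_ne_zero ha) hfa).lift_cardinalMk_le_trdeg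
  simpa only [toENat_lift, mk_option, map_add, map_one, hs.cardinalMk_eq_trdeg]
    using OrderHomClass.mono toENat hle

lemma toENat_trdeg_le_of_injective (f : A →ₐ[k] B) (hf : Function.Injective f) :
    toENat (trdeg k A) ≤ toENat (trdeg k B) := by
  simpa only [toENat_lift] using OrderHomClass.mono toENat (lift_trdeg_le_of_injective f hf)

lemma toENat_trdeg_quotient_ker (f : A →ₐ[k] B) :
    toENat (trdeg k (A ⧸ RingHom.ker f)) = toENat (trdeg k f.range) := by
  simpa only [toENat_lift] using congrArg toENat (Ideal.quotientKerEquivRange f).lift_trdeg_eq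

lemma toENat_trdeg_add_toENat_trdeg {k T : Type*} [Field k] [CommRing T] [IsDomain T]
    [Algebra k T] (S : Subalgebra k T) :
    toENat (trdeg k S) + toENat (trdeg S T) = toENat (trdeg k T) := by
  rw [← map_add, trdeg_add_eq]

end TranscendenceDegree

section KrullDimension

variable (k : Type*) {R : Type*} [Field k] [CommRing R] [Algebra k R]

lemma toENat_trdeg_quotient_add_one_le_of_lt {p q : Ideal R} [p.IsPrime] [q.IsPrime] (h : p < q) :
    toENat (trdeg k (R ⧸ q)) + 1 ≤ toENat (trdeg k (R ⧸ p)) := by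
  refine toENat_trdeg_add_one_le_of_surjective_of_not_injective (Ideal.Quotient.factorₐ k h.le)
    (Ideal.Quotient.factor_surjective h.le) fun hinj ↦ ?_
  obtain ⟨x, hxq, hxp⟩ := SetLike.exists_of_lt h
  exact hxp (Ideal.Quotient.eq_zero_iff_mem.1 <|
    hinj <| by simpa using Ideal.Quotient.eq_zero_iff_mem.2 hxq)

lemma toENat_trdeg_quotient_add_one_le {p : Ideal R} [IsDomain R] [p.IsPrime] (h : p ≠ ⊥) :
    toENat (trdeg k (R ⧸ p)) + 1 ≤ toENat (trdeg k R) := by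
  refine toENat_trdeg_add_one_le_of_surjective_of_not_injective (Ideal.Quotient.mkₐ k p)
    (Ideal.Quotient.mkₐ_surjective k p) fun hinj ↦ h ?_
  rw [← Ideal.Quotient.mkₐ_ker k p]
  exact (RingHom.injective_iff_ker_eq_bot _).1 hinj

lemma coheight_le_toENat_trdeg_quotient (p : PrimeSpectrum R) :
    coheight p ≤ toENat (trdeg k (R ⧸ p.asIdeal)) :=
  coheight_le_of_add_one_le_of_lt (f := fun p : PrimeSpectrum R ↦ toENat (trdeg k (R ⧸ p.asIdeal)))
    (fun _ _ hpq ↦ toENat_trdeg_quotient_add_one_le_of_lt k hpq) p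

lemma ringKrullDim_le_toENat_trdeg : ringKrullDim R ≤ toENat (trdeg k R) := by
  rw [ringKrullDim, Order.krullDim_eq_iSup_coheight]
  refine iSup_le fun p ↦ WithBot.coe_le_coe.2 <| (coheight_le_toENat_trdeg_quotient k p).trans ?_
  exact OrderHomClass.mono toENat (trdeg_le_of_surjective (Ideal.Quotient.mkₐ k p.asIdeal)
    (Ideal.Quotient.mkₐ_surjective k p.asIdeal))

end KrullDimension

lemma height_eq_natCard_of_isMaximal_mvPolynomial {k ι : Type*} [Field k] [Finite ι]
    (M : Ideal (MvPolynomial ι k)) [M.IsMaximal] : M.height = Nat.card ι := by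
  induction ι using Finite.induction_empty_option with
  | @of_equiv α β e ih =>
    let φ := (MvPolynomial.renameEquiv k e).toRingEquiv
    rw [← φ.height_comap, ih, Nat.card_congr e]
  | h_empty =>
    have hfield : IsField (MvPolynomial PEmpty k) :=
      (MvPolynomial.isEmptyAlgEquiv k PEmpty).toMulEquiv.isField (Field.toIsField k)
    have hM : ⊥ = M :=
      (Ring.isField_iff_maximal_bot.1 hfield).eq_of_le Ideal.IsPrime.ne_top' bot_le
    simp [← hM]
  | @h_option α _ ih =>
    let φ := (MvPolynomial.optionEquivLeft k α).toRingEquiv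
    let N := (M.map φ).comap Polynomial.C
    have : (M.map φ).IsMaximal := Ideal.map_isMaximal_of_equiv φ
    have : N.IsMaximal := Polynomial.isMaximal_comap_C_of_isJacobsonRing (M.map φ)
    have : (M.map φ).LiesOver N := ⟨rfl⟩
    rw [← φ.height_map, Polynomial.height_eq_height_add_one N, ih]
    simp

lemma height_eq_toENat_trdeg_of_isMaximal (k : Type*) {T : Type*} [Field k] [CommRing T]
    [IsDomain T] [Algebra k T] [FiniteType k T] (Q : Ideal T) [Q.IsMaximal] :
    Q.height = toENat (trdeg k T) := by
  refine le_antisymm (WithBot.coe_le_coe.1 <|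
    Ideal.height_le_ringKrullDim_of_isPrime.trans (ringKrullDim_le_toENat_trdeg k)) ?_
  obtain ⟨n, g, hg, hint⟩ := exists_integral_inj_algHom_of_fg k T
  let A := MvPolynomial (Fin n) k
  algebraize [g.toRingHom]
  have : FaithfulSMul A T := (faithfulSMul_iff_algebraMap_injective A T).2 hg
  have : IsScalarTower k A T := .of_algHom g
  have : Algebra.IsIntegral A T := ⟨hint⟩
  have : IsNoetherianRing T := FiniteType.isNoetherianRing k T
  have htrdeg : toENat (trdeg k T) = n := by
    simpa [A, trdeg_eq_zero (R := A)] using (congrArg toENat (lift_trdeg_add_eq k A T)).symm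
  calc toENat (trdeg k T) = (Q.under A).height := by
        rw [htrdeg, height_eq_natCard_of_isMaximal_mvPolynomial, Nat.card_fin]
    _ ≤ Q.height := by
        rw [Ideal.height_eq_height_add_of_liesOver_of_hasGoingDown (Q.under A) Q]
        exact le_self_add

section Avoidance

variable {T : Type*} [CommRing T]

lemma exists_mem_forall_notMem_of_height_lt {Q : Ideal T} {s : Set (Ideal T)} (hs : s.Finite)
    (hprime : ∀ p ∈ s, p.IsPrime) (hheight : ∀ p ∈ s, p.height < Q.height) :
    ∃ g ∈ Q, ∀ p ∈ s, g ∉ p := by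
  by_contra! h
  obtain ⟨p, hp, hQp⟩ := (Ideal.subset_union_prime_finite hs (f := id) ⊤ ⊤
    fun p hp _ _ ↦ hprime p hp).1 fun g hg ↦ by simpa using h g hg
  exact (hheight p hp).not_ge (Ideal.height_mono hQp)

variable [IsDomain T]

lemma one_lt_height_of_bot_lt_of_lt {p P : Ideal T} [p.IsPrime] [P.IsPrime] (hp : ⊥ < p)
    (hpP : p < P) : 1 < P.height := by
  have hp_height : 1 ≤ p.height := by simpa using Ideal.height_add_one_le_of_lt_of_isPrime hp
  refine (ENat.add_one_le_iff ENat.one_ne_top).1 ?_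
  calc 1 + 1 ≤ p.height + 1 := by gcongr
    _ ≤ P.height := Ideal.height_add_one_le_of_lt_of_isPrime hpP

variable [IsNoetherianRing T] {Q : Ideal T} [Q.IsPrime]

lemma exists_isPrime_lt_notMem (hQ : 1 < Q.height) {F : T} (hF : F ≠ 0) :
    ∃ P < Q, P.IsPrime ∧ P ≠ ⊥ ∧ F ∉ P := by
  obtain ⟨g, hgQ, hg⟩ := exists_mem_forall_notMem_of_height_lt (Q := Q)
    (s := insert ⊥ (Ideal.span {F}).minimalPrimes)
    ((Ideal.finite_minimalPrimes_of_isNoetherianRing T _).insert ⊥)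
    (by rintro p (rfl | hp); exacts [Ideal.isPrime_bot, hp.1.1])
    (by
      rintro p (rfl | hp)
      · simpa using zero_lt_one.trans hQ
      · exact (Ideal.height_le_one_of_isPrincipal_of_mem_minimalPrimes _ p hp).trans_lt hQ)
  obtain ⟨P, hP, hPQ⟩ := Ideal.exists_minimalPrimes_le
    ((Ideal.span_singleton_le_iff_mem Q).2 hgQ)
  have hP_prime : P.IsPrime := hP.1.1
  have hgP : g ∈ P := (Ideal.span_singleton_le_iff_mem P).1 hP.1.2
  have hP_height := Ideal.height_le_one_of_isPrincipal_of_mem_minimalPrimes _ P hP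
  refine ⟨P, hPQ.lt_of_ne fun h ↦ hQ.not_ge (h ▸ hP_height), hP_prime,
    fun h ↦ hg ⊥ (by simp) (h ▸ hgP), fun hFP ↦ ?_⟩
  obtain ⟨p, hp, hpP⟩ := Ideal.exists_minimalPrimes_le ((Ideal.span_singleton_le_iff_mem P).2 hFP)
  have hp_prime : p.IsPrime := hp.1.1
  have hbot_lt : ⊥ < p := bot_lt_iff_ne_bot.2 fun h ↦ hF <| by
    simpa [h] using (Ideal.span_singleton_le_iff_mem p).1 hp.1.2
  have hp_lt : p < P := hpP.lt_of_ne fun h ↦ hg p (by simp [hp]) (h ▸ hgP)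
  exact (one_lt_height_of_bot_lt_of_lt hbot_lt hp_lt).not_ge hP_height

lemma exists_primeSpectrum_notMem_height_le_coheight_add_one (hQ : 1 < Q.height)
    {F : T} (hF : F ≠ 0) :
    ∃ P : PrimeSpectrum T, P.asIdeal ≤ Q ∧ P.asIdeal ≠ ⊥ ∧ F ∉ P.asIdeal ∧
      Q.height ≤ coheight P + 1 := by
  obtain ⟨l, hl, hlen⟩ := Q.exists_ltSeries_length_eq_height
  have hlength : 2 ≤ l.length := by
    rw [← hlen] at hQ
    exact_mod_cast hQ
  let i : Fin (l.length + 1) := ⟨2, by omega⟩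
  have hi : 1 < (l i).asIdeal.height := by
    rw [PrimeSpectrum.height_eq_orderHeight]
    exact lt_of_lt_of_le (by simp [i]) (Order.index_le_height l i)
  have hiQ : (l i).asIdeal ≤ Q := by
    have hi_last : l i ≤ l.last := LTSeries.monotone l (Fin.le_last i)
    rwa [hl] at hi_last
  -- A maximal chain `l` up to `Q` loses one step when its part below `l 2` is replaced by `P`.
  obtain ⟨P, hPi, hP, hP_ne, hFP⟩ := exists_isPrime_lt_notMem hi hF
  refine ⟨⟨P, hP⟩, hPi.le.trans hiQ, hP_ne, hFP, ?_⟩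
  calc Q.height = ((i.rev : ℕ) : ℕ∞) + 1 + 1 := by
        rw [← hlen]
        norm_cast
        simp only [i, Fin.val_rev]
        omega
    _ ≤ coheight (l i) + 1 + 1 := by gcongr; exact Order.rev_index_le_coheight l i
    _ ≤ coheight (⟨P, hP⟩ : PrimeSpectrum T) + 1 := by
        gcongr; exact Order.coheight_add_one_le hPi

end Avoidance

lemma isAlgebraic_of_surjective_of_isIntegral_smul {D T B U : Type*} [CommRing D] [CommRing T]
    [Algebra D T] [CommRing B] [IsDomain B] [CommRing U] [Algebra B U] (g : D →+* B) (f : T →+* U)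
    (hfg : (algebraMap B U).comp g = f.comp (algebraMap D T)) (hf : Function.Surjective f)
    {s : Set T} (hs : adjoin D s = ⊤) {d : D} (hint : ∀ x ∈ s, IsIntegral D (d • x))
    (hd : g d ≠ 0) : Algebra.IsAlgebraic B U := by
  have hfg_apply (c : D) : f (algebraMap D T c) = algebraMap B U (g c) :=
    (RingHom.congr_fun hfg c).symm
  refine ⟨hf.forall.2 fun y ↦ ?_⟩
  have hy : y ∈ adjoin D s := hs ▸ mem_top
  induction hy using adjoin_induction with
  | mem x hx =>
    have hgx : IsIntegral B (g d • f x) := by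
      simpa only [smul_def, map_mul, hfg_apply] using (hint x hx).map_of_comp_eq g f hfg
    exact .of_smul_isIntegral (by simpa using hd) hgx
  | algebraMap c => exact hfg_apply c ▸ isAlgebraic_algebraMap (g c)
  | add x y _ _ hx hy => exact map_add f x y ▸ hx.add hy
  | mul x y _ _ hx hy => exact map_mul f x y ▸ hx.mul hy

lemma apply_mem_adjoin_map_of_mem_adjoin {k T U : Type*} [CommRing k] [CommRing T] [CommRing U]
    [Algebra k T] [Algebra k U] (f : T →ₐ[k] U) (S : Subalgebra k T) {t : Set T} {x : T}
    (hx : x ∈ adjoin S t) : f x ∈ adjoin (S.map f) (f '' t) := by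
  induction hx using adjoin_induction with
  | mem x hx => exact subset_adjoin ⟨x, hx, rfl⟩
  | algebraMap c =>
    exact (adjoin (S.map f) (f '' t)).algebraMap_mem ⟨f c, S.mem_map.2 ⟨c, c.2, rfl⟩⟩
  | add x y _ _ hx hy => exact map_add f x y ▸ add_mem hx hy
  | mul x y _ _ hx hy => exact map_mul f x y ▸ mul_mem hx hy

lemma exists_ne_zero_forall_trdeg_map_mk_le {k T : Type*} [CommRing k] [CommRing T] [IsDomain T]
    [Algebra k T] [FiniteType k T] (S : Subalgebra k T) :
    ∃ F : T, F ≠ 0 ∧ ∀ P : Ideal T, P.IsPrime → F ∉ P →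
      trdeg (S.map (Ideal.Quotient.mkₐ k P)) (T ⧸ P) ≤ trdeg S T := by
  obtain ⟨t, ht⟩ := exists_isTranscendenceBasis S T
  let D := adjoin S t
  have : Algebra.IsAlgebraic D T := by
    have := ht.isAlgebraic
    rwa [Subtype.range_coe] at this
  obtain ⟨s, hs⟩ := (FiniteType.of_restrictScalars_finiteType k D T).out
  obtain ⟨d, hd, hint⟩ := IsAlgebraic.exists_integral_multiples D s
  refine ⟨d, by simpa using hd, fun P _ hdP ↦ ?_⟩
  let S' := S.map (Ideal.Quotient.mkₐ k P)
  let B := adjoin S' (Ideal.Quotient.mk P '' t)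
  let g : D →+* B := (Ideal.Quotient.mk P).restrict D B fun _ hx ↦
    apply_mem_adjoin_map_of_mem_adjoin (Ideal.Quotient.mkₐ k P) S hx
  have hgd : g d ≠ 0 := fun h ↦ hdP (Ideal.Quotient.eq_zero_iff_mem.1 (congrArg Subtype.val h))
  have : Algebra.IsAlgebraic B (T ⧸ P) :=
    isAlgebraic_of_surjective_of_isIntegral_smul g (Ideal.Quotient.mk P) rfl
      Ideal.Quotient.mk_surjective hs hint hgd
  calc trdeg S' (T ⧸ P) ≤ #(Ideal.Quotient.mk P '' t) := IsAlgebraic.trdeg_le_cardinalMk _ _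
    _ ≤ #t := mk_image_le
    _ = trdeg S T := ht.cardinalMk_eq_trdeg

lemma exists_isPrime_le_ne_bot_toENat_trdeg_le_map_mk_add_one {k T : Type*} [Field k] [CommRing T]
    [IsDomain T] [Algebra k T] [FiniteType k T] {Q : Ideal T} [Q.IsMaximal] (hQ : Q ≠ ⊥)
    (S : Subalgebra k T) :
    ∃ P ≤ Q, P.IsPrime ∧ P ≠ ⊥ ∧
      toENat (trdeg k S) ≤ toENat (trdeg k (S.map (Ideal.Quotient.mkₐ k P))) + 1 := by
  have hT : Q.height = toENat (trdeg k T) := height_eq_toENat_trdeg_of_isMaximal k Q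
  obtain hQ_height | hQ_height := le_or_gt Q.height 1
  · refine ⟨Q, le_rfl, inferInstance, hQ, ?_⟩
    calc toENat (trdeg k S) ≤ toENat (trdeg k T) :=
          toENat_trdeg_le_of_injective S.val Subtype.val_injective
      _ ≤ 1 := hT ▸ hQ_height
      _ ≤ toENat (trdeg k (S.map (Ideal.Quotient.mkₐ k Q))) + 1 := le_add_self
  have : IsNoetherianRing T := FiniteType.isNoetherianRing k T
  obtain ⟨F, hF, hF_trdeg⟩ := exists_ne_zero_forall_trdeg_map_mk_le S
  obtain ⟨P, hPQ, hP_ne, hFP, hP_coheight⟩ :=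
    exists_primeSpectrum_notMem_height_le_coheight_add_one hQ_height hF
  refine ⟨P.asIdeal, hPQ, P.isPrime, hP_ne, ?_⟩
  set S' := S.map (Ideal.Quotient.mkₐ k P.asIdeal)
  have : FiniteType S T := .of_restrictScalars_finiteType k S T
  have hfin : toENat (trdeg S T) ≠ ⊤ := toENat_ne_top.2 trdeg_lt_aleph0_of_finiteType
  rw [← ENat.add_le_add_iff_right hfin]
  calc toENat (trdeg k S) + toENat (trdeg S T) = Q.height := by
        rw [hT, toENat_trdeg_add_toENat_trdeg]
    _ ≤ coheight P + 1 := hP_coheight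
    _ ≤ toENat (trdeg k (T ⧸ P.asIdeal)) + 1 := by
        gcongr; exact coheight_le_toENat_trdeg_quotient k P
    _ = toENat (trdeg k S') + toENat (trdeg S' (T ⧸ P.asIdeal)) + 1 := by
        rw [toENat_trdeg_add_toENat_trdeg]
    _ ≤ toENat (trdeg k S') + toENat (trdeg S T) + 1 := by
        gcongr; exact hF_trdeg P.asIdeal P.isPrime hFP
    _ = toENat (trdeg k S') + 1 + toENat (trdeg S T) := by ring

lemma height_add_toENat_trdeg_quotient_le {k R : Type*} [CommRing k] [CommRing R] [Algebra k R]
    {p q : Ideal R} [p.IsPrime] [q.IsPrime] (hpq : p ≤ q)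
    (h : toENat (trdeg k (R ⧸ p)) ≤ toENat (trdeg k (R ⧸ q)) + 1) :
    p.height + toENat (trdeg k (R ⧸ p)) ≤ q.height + toENat (trdeg k (R ⧸ q)) := by
  obtain rfl | hlt := hpq.eq_or_lt
  · rfl
  calc p.height + toENat (trdeg k (R ⧸ p)) ≤ p.height + (toENat (trdeg k (R ⧸ q)) + 1) := by gcongr
    _ = p.height + 1 + toENat (trdeg k (R ⧸ q)) := by ring
    _ ≤ q.height + toENat (trdeg k (R ⧸ q)) := by
        gcongr; exact Ideal.height_add_one_le_of_lt_of_isPrime hlt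

lemma height_ker_add_toENat_trdeg_le_height_comap {k R T : Type*} [Field k] [CommRing R]
    [Algebra k R] [CommRing T] [IsDomain T] [Algebra k T] [FiniteType k T] (φ : R →ₐ[k] T)
    (Q : Ideal T) [Q.IsMaximal] :
    (RingHom.ker φ).height + toENat (trdeg k (R ⧸ RingHom.ker φ)) ≤ (Q.comap φ).height := by
  induction hn : toENat (trdeg k T) using WellFoundedLT.induction generalizing T with
  | ind n ih =>
  subst hn
  obtain rfl | hQ := eq_or_ne Q ⊥
  · have hT : toENat (trdeg k T) = 0 := by
      simp [← height_eq_toENat_trdeg_of_isMaximal k (⊥ : Ideal T)]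
    have hker : toENat (trdeg k (R ⧸ RingHom.ker φ)) = 0 := by
      rw [toENat_trdeg_quotient_ker, ← nonpos_iff_eq_zero, ← hT]
      exact toENat_trdeg_le_of_injective φ.range.val Subtype.val_injective
    rw [hker, add_zero]
    rfl
  obtain ⟨P, hPQ, hP, hP_ne, hP_trdeg⟩ :=
    exists_isPrime_le_ne_bot_toENat_trdeg_le_map_mk_add_one hQ φ.range
  let mkP := Ideal.Quotient.mkₐ k P
  let ψ := mkP.comp φ
  have hdrop : toENat (trdeg k (T ⧸ P)) < toENat (trdeg k T) :=
    (ENat.add_one_le_iff (toENat_ne_top.2 trdeg_lt_aleph0_of_finiteType)).1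
      (toENat_trdeg_quotient_add_one_le k hP_ne)
  have hQ_map : (Q.map mkP).IsMaximal :=
    Ideal.IsMaximal.map_of_surjective_of_ker_le (Ideal.Quotient.mkₐ_surjective k P)
      ((Ideal.Quotient.mkₐ_ker k P).trans_le hPQ)
  have hcomap : (Q.map mkP).comap ψ = Q.comap φ :=
    congrArg (Ideal.comap φ) (Ideal.comap_map_mk hPQ)
  have hker_le : RingHom.ker φ ≤ RingHom.ker ψ := fun x hx ↦
    (congrArg mkP hx).trans (map_zero mkP)
  have := RingHom.ker_isPrime φ
  have := RingHom.ker_isPrime ψ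
  calc (RingHom.ker φ).height + toENat (trdeg k (R ⧸ RingHom.ker φ))
    _ ≤ (RingHom.ker ψ).height + toENat (trdeg k (R ⧸ RingHom.ker ψ)) := by
        refine height_add_toENat_trdeg_quotient_le hker_le ?_
        rwa [toENat_trdeg_quotient_ker, toENat_trdeg_quotient_ker, AlgHom.range_comp]
    _ ≤ ((Q.map mkP).comap ψ).height := ih _ hdrop ψ _ rfl
    _ = (Q.comap φ).height := by rw [hcomap]

/-- Let `k` be a field, `T` an affine domain over `k`, and `R` a `k`-subalgebra of `T`.
Then for every maximal ideal `M` of `R` such that `MT ≠ T`, the height of `M` (the Krull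
dimension of the localization `R_M`) equals the Krull dimension of `R`. -/
theorem height_maximal_eq_ringKrullDim_of_subalgebra_of_affine
    {k T : Type*} [Field k] [CommRing T] [IsDomain T] [Algebra k T]
    [Algebra.FiniteType k T] (R : Subalgebra k T)
    (M : Ideal R) (hM : M.IsMaximal)
    (hMT : Ideal.map (algebraMap R T) M ≠ ⊤) :
    ringKrullDim (Localization.AtPrime M) = ringKrullDim R := by
  obtain ⟨Q, hQ, hMQ⟩ := Ideal.exists_le_maximal _ hMT
  have hM_eq : M = Q.comap R.val :=
    hM.eq_of_le (Ideal.comap_ne_top _ hQ.ne_top) (Ideal.map_le_iff_le_comap.1 hMQ)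
  rw [IsLocalization.AtPrime.ringKrullDim_eq_height M]
  refine le_antisymm Ideal.height_le_ringKrullDim_of_isPrime ?_
  refine (ringKrullDim_le_toENat_trdeg k).trans (WithBot.coe_le_coe.2 ?_)
  calc toENat (trdeg k R) = toENat (trdeg k (R ⧸ RingHom.ker R.val)) := by
        rw [toENat_trdeg_quotient_ker, R.range_val]
    _ ≤ (Q.comap R.val).height :=
        le_add_self.trans (height_ker_add_toENat_trdeg_le_height_comap R.val Q)
    _ = M.height := by rw [hM_eq]
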